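/- For every convex polygon D with n sides, every finite point set S in general position with respect to D, and the generalized Delaunay triangulation DT_D(S): if D' is a homothet of D, then the set of points D' ∩ S induces a connected subgraph of DT_D(S). -/

import Mathlib

open scoped Classical

/-- `D'` is a homothetic copy (positive scaling plus translation) of `D`. -/
def IsHomothet (D D' : Set (ℝ × ℝ)) : Prop :=
  ∃ lam : ℝ, 0 < lam ∧ ∃ v : ℝ × ℝ, D' = (fun p => lam • p + v) '' D

/-- The generalized Delaunay graph of the point set `S` with respect to `D`: two points of
`S` are adjacent iff some homothet of `D` contains exactly those two points of `S`. -/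
def DelaunayGraph (D : Set (ℝ × ℝ)) (S : Finset (ℝ × ℝ)) : SimpleGraph (ℝ × ℝ) :=
  SimpleGraph.fromRel (fun p q => p ∈ S ∧ q ∈ S ∧
    ∃ D'' : Set (ℝ × ℝ), IsHomothet D D'' ∧ ∀ s ∈ S, (s ∈ D'' ↔ s = p ∨ s = q))

/-- `S` is in general position with respect to the convex polygon `D` with vertex set `W`:
no two points of `S` lie on a line parallel to a side of `D`, and no four points of `S` lie
on the boundary of a homothet of `D`. -/
def GeneralPosition (D : Set (ℝ × ℝ)) (W : Finset (ℝ × ℝ)) (S : Finset (ℝ × ℝ)) : Prop :=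
  (∀ a ∈ W, ∀ b ∈ W, a ≠ b → segment ℝ a b ⊆ frontier D →
    ∀ p ∈ S, ∀ q ∈ S, p ≠ q → ¬ ∃ t : ℝ, q - p = t • (b - a)) ∧
  (∀ D' : Set (ℝ × ℝ), IsHomothet D D' →
    (S.filter (fun p => p ∈ frontier D')).card ≤ 3)

/-!
Let `E` be a homothet of `D` and `p` a point of `S ∩ E`, not the only one. Shrinking `E` towards
`p` until some `r ∈ S ∩ E` is about to leave, and then shrinking slightly towards a point just
beyond `r` on the ray from `p`, loses `r` and keeps every other point of `S ∩ E`: such a point `x`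
survives because the midpoint of `x` and `r` is interior to the shrunken homothet, whose boundary
contains no segment parallel to `xr`. So from `S ∩ E` one can drop some point `r` or, starting over
with `r` in the role of `p`, some other point `r'`. By induction on the number of points,
`(S ∩ E) \ {r}` and `(S ∩ E) \ {r'}` are connected; either they meet, or `S ∩ E = {r, r'}` is an edge.
-/

open AffineMap Filter Topology

section Graph

variable {V : Type*} [DecidableEq V] {G : SimpleGraph V} {𝒜 : Set (Finset V)}

theorem connected_induce_of_exists_erase_mem
    (hadj : ∀ p q, p ≠ q → {p, q} ∈ 𝒜 → G.Adj p q)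
    (herase : ∀ F ∈ 𝒜, F.Nontrivial → ∀ p ∈ F, ∃ r ∈ F, r ≠ p ∧ F.erase r ∈ 𝒜)
    (F : Finset V) (hF : F ∈ 𝒜) (hne : F.Nonempty) : (G.induce (F : Set V)).Connected := by
  induction F using Finset.strongInduction with
  | H F ih =>
  obtain ⟨p, rfl⟩ | hnt := hne.exists_eq_singleton_or_nontrivial
  · rw [Finset.coe_singleton]
    exact ⟨.of_subsingleton⟩
  obtain ⟨p, hp⟩ := hne
  obtain ⟨r, hr, -, hFr⟩ := herase F hF hnt p hp
  obtain ⟨r', hr', hr'r, hFr'⟩ := herase F hF hnt r hr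
  by_cases hz : ∃ z ∈ F, z ≠ r ∧ z ≠ r'
  · obtain ⟨z, hz, hzr, hzr'⟩ := hz
    have hzFr := Finset.mem_erase.2 ⟨hzr, hz⟩
    have hzFr' := Finset.mem_erase.2 ⟨hzr', hz⟩
    have hunion : (F : Set V) = ↑(F.erase r) ∪ ↑(F.erase r') := by
      rw [← Finset.coe_union, Finset.erase_union_of_mem (Finset.mem_erase.2 ⟨hr'r.symm, hr⟩),
        Finset.union_eq_left.2 (Finset.erase_subset r' F)]
    rw [hunion]
    exact SimpleGraph.induce_union_connected
      (ih _ (Finset.erase_ssubset hr) hFr ⟨z, hzFr⟩).preconnected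
      (ih _ (Finset.erase_ssubset hr') hFr' ⟨z, hzFr'⟩).preconnected ⟨z, hzFr, hzFr'⟩
  · have hpair : F = {r, r'} := by grind
    subst hpair
    rw [Finset.coe_pair]
    exact SimpleGraph.induce_pair_connected_of_adj (hadj r r' hr'r.symm hF)

end Graph

section Dilation

theorem lineMap_mem_of_le_of_starConvex {V : Type*} [AddCommGroup V] [Module ℝ V] {E : Set V}
    {p q : V} (hE : StarConvex ℝ p E) {s t : ℝ} (hs : 0 ≤ s) (hst : s ≤ t)
    (hq : lineMap p q t ∈ E) : lineMap p q s ∈ E := by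
  obtain rfl | hlt := hst.eq_or_lt
  · exact hq
  have ht := hs.trans_lt hlt
  have h := hE.add_smul_sub_mem hq (div_nonneg hs ht.le) ((div_le_one ht).2 hst)
  rwa [add_comm, ← lineMap_apply_module', lineMap_lineMap_right, div_mul_cancel₀ _ ht.ne'] at h

variable {V : Type*} [NormedAddCommGroup V] [NormedSpace ℝ V] {E : Set V} {p : V}

theorem exists_isGreatest_lineMap_mem {q : V} (hE : IsCompact E) (hpq : p ≠ q) (hq : q ∈ E) :
    ∃ σ, IsGreatest {s : ℝ | lineMap p q s ∈ E} σ := by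
  have hcompact : IsCompact {s : ℝ | lineMap p q s ∈ E} :=
    Metric.isCompact_of_isClosed_isBounded (hE.isClosed.preimage lineMap_continuous)
      ((antilipschitzWith_lineMap hpq).isBounded_preimage hE.isBounded)
  exact hcompact.exists_isGreatest ⟨1, by simpa using hq⟩

theorem exists_isGreatest_lineMap_mem_forall_mem (hE : IsCompact E) (hstar : StarConvex ℝ p E)
    {F : Finset V} (hFE : ↑F ⊆ E) (hF : ∃ q ∈ F, q ≠ p) :
    ∃ r ∈ F, r ≠ p ∧ ∃ σ ≥ 1, IsGreatest {s : ℝ | lineMap p r s ∈ E} σ ∧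
      ∀ q ∈ F, lineMap p q σ ∈ E := by
  have hexit (q) (hq : q ∈ F.erase p) : ∃ σ, IsGreatest {s : ℝ | lineMap p q s ∈ E} σ :=
    exists_isGreatest_lineMap_mem hE (Finset.ne_of_mem_erase hq).symm
      (hFE (Finset.mem_of_mem_erase hq))
  choose! τ hτ using hexit
  have hτ_one (q) (hq : q ∈ F.erase p) : 1 ≤ τ q :=
    (hτ q hq).2 (by simpa using hFE (Finset.mem_of_mem_erase hq))
  obtain ⟨q₀, hq₀, hq₀p⟩ := hF
  obtain ⟨r, hr, hmin⟩ :=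
    (F.erase p).exists_min_image τ ⟨q₀, Finset.mem_erase.2 ⟨hq₀p, hq₀⟩⟩
  refine ⟨r, Finset.mem_of_mem_erase hr, Finset.ne_of_mem_erase hr, τ r, hτ_one r hr, hτ r hr,
    fun q hq => ?_⟩
  obtain rfl | hqp := eq_or_ne q p
  · simpa using hFE hq
  · have hq' := Finset.mem_erase.2 ⟨hqp, hq⟩
    exact lineMap_mem_of_le_of_starConvex hstar (zero_le_one.trans (hτ_one r hr)) (hmin q hq')
      (hτ q hq').1

end Dilation

section Perturbation

variable {V : Type*} [AddCommGroup V] [Module ℝ V] [TopologicalSpace V] [IsTopologicalAddGroup V]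
  [ContinuousSMul ℝ V] {E : Set V} {p r : V}

theorem eventually_midpoint_lineMap_mem {x : V} (h : midpoint ℝ x r ∈ interior E) :
    ∀ᶠ s in 𝓝[>] (1 : ℝ), midpoint ℝ x (lineMap p r s) ∈ E := by
  have hcont : Continuous fun s : ℝ => midpoint ℝ x (lineMap p r s) := by
    unfold midpoint
    fun_prop
  refine (hcont.tendsto 1).mono_left nhdsWithin_le_nhds (mem_interior_iff_mem_nhds.1 ?_)
  simpa using h

theorem eventually_lineMap_notMem (hE : IsClosed E) {x : V} (hx : x ∉ E) (c : V) :
    ∀ᶠ η in 𝓝[>] (0 : ℝ), lineMap x c η ∉ E := by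
  have hcont : Continuous fun η : ℝ => lineMap x c η := by fun_prop
  refine (hcont.tendsto 0).mono_left nhdsWithin_le_nhds (hE.isOpen_compl.mem_nhds ?_)
  simpa using hx

theorem exists_homothety_mem_iff_mem_and_ne (hclosed : IsClosed E) (hconvex : Convex ℝ E)
    {S : Finset V} (hmid : ∀ x ∈ S, x ∈ E → x ≠ r → midpoint ℝ x r ∈ interior E)
    (hout : ∀ s : ℝ, 1 < s → lineMap p r s ∉ E) :
    ∃ c, ∃ ρ : ℝ, 0 < ρ ∧ ∀ x ∈ S, homothety c ρ x ∈ E ↔ x ∈ E ∧ x ≠ r := by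
  have hnear : ∀ᶠ s in 𝓝[>] (1 : ℝ),
      ∀ x ∈ S, x ∈ E → x ≠ r → midpoint ℝ x (lineMap p r s) ∈ E := by
    simp only [eventually_all_finset, eventually_imp_distrib_left]
    exact fun x hxS hx hxr => eventually_midpoint_lineMap_mem (hmid x hxS hx hxr)
  obtain ⟨s, hs, hs1 : 1 < s⟩ := (hnear.and self_mem_nhdsWithin).exists
  set c : V := lineMap p r s with hc
  have hfar : ∀ᶠ η in 𝓝[>] (0 : ℝ), ∀ x ∈ S, x ∉ E → lineMap x c η ∉ E := by
    simp only [eventually_all_finset, eventually_imp_distrib_left]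
    exact fun x _ hx => eventually_lineMap_notMem hclosed hx c
  obtain ⟨η, hη, hη0, hη2⟩ :=
    (hfar.and (Ioo_mem_nhdsGT (show (0 : ℝ) < 2⁻¹ by norm_num))).exists
  refine ⟨c, 1 - η, by linarith, fun x hxS => ?_⟩
  rw [homothety_eq_lineMap, lineMap_apply_one_sub]
  refine ⟨fun h => ⟨not_imp_not.1 (hη x hxS) h, ?_⟩, fun ⟨hx, hxr⟩ => ?_⟩
  · rintro rfl
    have hbeyond : lineMap x c η = lineMap p x (1 + η * (s - 1)) := by
      rw [hc]
      simp only [lineMap_apply_module]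
      module
    exact hout _ (by nlinarith) (hbeyond ▸ h)
  · refine lineMap_mem_of_le_of_starConvex (hconvex.starConvex hx) hη0.le hη2.le ?_
    simpa [midpoint] using hs x hxS hx hxr

end Perturbation

section BoundarySegments

variable {V : Type*} [AddCommGroup V] [Module ℝ V] [TopologicalSpace V]

/-- No two points of `S` lie on a line parallel to a nondegenerate segment in the boundary of `D`.
For a polygon this is the first half of `GeneralPosition`; for a strictly convex body it holds for
every `S`. -/
def NoPairParallelToBoundary (D S : Set V) : Prop :=
  ∀ a b, a ≠ b → segment ℝ a b ⊆ frontier D →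
    ∀ p ∈ S, ∀ q ∈ S, p ≠ q → ¬ ∃ t : ℝ, q - p = t • (b - a)

variable [IsTopologicalAddGroup V] [ContinuousSMul ℝ V]

theorem segment_subset_frontier_of_midpoint_notMem_interior {E : Set V} (hE : Convex ℝ E)
    {q r : V} (hq : q ∈ E) (hr : r ∈ E) (hm : midpoint ℝ q r ∉ interior E) :
    segment ℝ q r ⊆ frontier E := by
  rw [segment_eq_image_lineMap]
  rintro _ ⟨t, ht, rfl⟩
  refine ⟨subset_closure (hE.lineMap_mem hq hr ht), fun hint => hm ?_⟩
  have hopp : lineMap r q t ∈ E := hE.lineMap_mem hr hq ht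
  have hmid : midpoint ℝ q r = midpoint ℝ (lineMap q r t) (lineMap r q t) := by
    simp only [midpoint_eq_smul_add, lineMap_apply_module]
    module
  rw [hmid]
  exact hE.openSegment_interior_self_subset_interior hint hopp (midpoint_mem_openSegment _ _)

theorem NoPairParallelToBoundary.midpoint_mem_interior {E S : Set V}
    (h : NoPairParallelToBoundary E S) (hE : Convex ℝ E) {q r : V} (hqS : q ∈ S) (hrS : r ∈ S)
    (hq : q ∈ E) (hr : r ∈ E) (hqr : q ≠ r) : midpoint ℝ q r ∈ interior E := by
  by_contra hm
  exact h q r hqr (segment_subset_frontier_of_midpoint_notMem_interior hE hq hr hm)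
    q hqS r hrS hqr ⟨1, (one_smul ℝ _).symm⟩

end BoundarySegments

section Homothets

variable {D E : Set (ℝ × ℝ)} {S : Finset (ℝ × ℝ)}

theorem IsHomothet.preimage_homothety (h : IsHomothet D E) (c : ℝ × ℝ) {ρ : ℝ} (hρ : 0 < ρ) :
    IsHomothet D (homothety c ρ ⁻¹' E) := by
  obtain ⟨lam, hlam, v, rfl⟩ := h
  refine ⟨ρ⁻¹ * lam, by positivity, ρ⁻¹ • (v - c) + c, ?_⟩
  have hinv (x y : ℝ × ℝ) : y = homothety c ρ x ↔ ρ⁻¹ • (y - c) + c = x := by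
    rw [homothety_apply, vsub_eq_sub, vadd_eq_add, ← sub_eq_iff_eq_add, ← inv_smul_eq_iff₀ hρ.ne',
      eq_sub_iff_add_eq]
  ext x
  simp only [Set.mem_preimage, Set.mem_image, hinv]
  refine exists_congr fun d => and_congr_right fun _ => Eq.congr_left ?_
  module

theorem IsHomothet.isCompact (h : IsHomothet D E) (hD : IsCompact D) : IsCompact E := by
  obtain ⟨lam, -, v, rfl⟩ := h
  exact hD.image (by fun_prop)

theorem IsHomothet.convex (h : IsHomothet D E) (hD : Convex ℝ D) : Convex ℝ E := by
  obtain ⟨lam, -, v, rfl⟩ := h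
  simpa only [add_comm] using hD.affinity v lam

theorem NoPairParallelToBoundary.of_isHomothet {S : Set (ℝ × ℝ)}
    (h : NoPairParallelToBoundary D S) (hE : IsHomothet D E) : NoPairParallelToBoundary E S := by
  obtain ⟨lam, hlam, v, rfl⟩ := hE
  let f : (ℝ × ℝ) ≃ₜ (ℝ × ℝ) :=
    (Homeomorph.smulOfNeZero lam hlam.ne').trans (Homeomorph.addRight v)
  have hf (x : ℝ × ℝ) : f x = lam • x + v := rfl
  intro a b hab hseg p hp q hq hpq ⟨t, ht⟩
  obtain ⟨a, rfl⟩ := f.surjective a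
  obtain ⟨b, rfl⟩ := f.surjective b
  refine h a b (ne_of_apply_ne f hab) ?_ p hp q hq hpq ⟨t * lam, ?_⟩
  · have hlineMap (s : ℝ) : f (lineMap a b s) = lineMap (f a) (f b) s := by
      simp only [hf, lineMap_apply_module]
      module
    rw [segment_eq_image_lineMap] at hseg ⊢
    rw [← Set.image_subset_image_iff f.injective, f.image_frontier, Set.image_image]
    simpa only [hlineMap, Set.image_subset_iff] using! hseg
  · rw [ht, hf, hf]
    module

/-- The subsets of `S` cut out by homothets of `D`. The edges of the Delaunay graph are the
two-element ones. -/
def homothetTraces (D : Set (ℝ × ℝ)) (S : Finset (ℝ × ℝ)) : Set (Finset (ℝ × ℝ)) :=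
  {F | ∃ E, IsHomothet D E ∧ S.filter (· ∈ E) = F}

theorem delaunayGraph_adj_of_pair_mem_homothetTraces {p q : ℝ × ℝ} (hpq : p ≠ q)
    (h : {p, q} ∈ homothetTraces D S) : (DelaunayGraph D S).Adj p q := by
  obtain ⟨E, hE, hF⟩ := h
  have hmem (s : ℝ × ℝ) : s ∈ S ∧ s ∈ E ↔ s = p ∨ s = q := by
    rw [← Finset.mem_filter, hF, Finset.mem_insert, Finset.mem_singleton]
  refine (SimpleGraph.fromRel_adj _ _ _).2 ⟨hpq, .inl ⟨((hmem p).2 (.inl rfl)).1,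
    ((hmem q).2 (.inr rfl)).1, E, hE, fun s hs => ?_⟩⟩
  rw [← hmem, and_iff_right hs]

theorem exists_isHomothet_mem_iff_and_lineMap_notMem (hE : IsHomothet D E) (hD : IsCompact D)
    (hconvex : Convex ℝ D) {p : ℝ × ℝ} (hp : p ∈ E) (hother : ∃ q ∈ S, q ∈ E ∧ q ≠ p) :
    ∃ r ∈ S, r ∈ E ∧ r ≠ p ∧ ∃ E', IsHomothet D E' ∧ (∀ x ∈ S, x ∈ E' ↔ x ∈ E) ∧
      ∀ s : ℝ, 1 < s → lineMap p r s ∉ E' := by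
  have hstar : StarConvex ℝ p E := (hE.convex hconvex).starConvex hp
  obtain ⟨r, hr, hrp, σ, hσ, hgreatest, hσE⟩ := exists_isGreatest_lineMap_mem_forall_mem
    (F := S.filter (· ∈ E)) (hE.isCompact hD) hstar
    (fun x hx => (Finset.mem_filter.1 hx).2) (by simpa only [Finset.mem_filter, and_assoc])
  obtain ⟨hrS, hrE⟩ := Finset.mem_filter.1 hr
  have hσ0 : 0 < σ := zero_lt_one.trans_le hσ
  refine ⟨r, hrS, hrE, hrp, _, hE.preimage_homothety p hσ0, fun x hxS => ⟨fun hx => ?_,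
    fun hx => ?_⟩, fun s hs hmem => ?_⟩
  · simpa using lineMap_mem_of_le_of_starConvex hstar zero_le_one hσ
      (homothety_eq_lineMap p σ x ▸ hx)
  · rw [Set.mem_preimage, homothety_eq_lineMap]
    exact hσE x (Finset.mem_filter.2 ⟨hxS, hx⟩)
  · rw [Set.mem_preimage, homothety_eq_lineMap, lineMap_lineMap_right] at hmem
    exact (lt_mul_of_one_lt_left hσ0 hs).not_ge (hgreatest.2 (mul_comm s σ ▸ hmem))

theorem exists_erase_mem_homothetTraces (hD : IsCompact D) (hconvex : Convex ℝ D)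
    (hS : NoPairParallelToBoundary D S) {F : Finset (ℝ × ℝ)} (hF : F ∈ homothetTraces D S)
    (hnt : F.Nontrivial) {p : ℝ × ℝ} (hp : p ∈ F) :
    ∃ r ∈ F, r ≠ p ∧ F.erase r ∈ homothetTraces D S := by
  obtain ⟨E, hE, rfl⟩ := hF
  obtain ⟨q, hq, hqp⟩ := hnt.exists_ne p
  obtain ⟨hqS, hqE⟩ := Finset.mem_filter.1 hq
  obtain ⟨r, hrS, hrE, hrp, E', hE', hiff, hout⟩ := exists_isHomothet_mem_iff_and_lineMap_notMem
    hE hD hconvex (Finset.mem_filter.1 hp).2 ⟨q, hqS, hqE, hqp⟩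
  have hmid (x) (hxS : x ∈ S) (hx : x ∈ E') (hxr : x ≠ r) : midpoint ℝ x r ∈ interior E' :=
    (hS.of_isHomothet hE').midpoint_mem_interior (hE'.convex hconvex) hxS hrS hx
      ((hiff r hrS).2 hrE) hxr
  obtain ⟨c, ρ, hρ, hdrop⟩ := exists_homothety_mem_iff_mem_and_ne (hE'.isCompact hD).isClosed
    (hE'.convex hconvex) hmid hout
  refine ⟨r, Finset.mem_filter.2 ⟨hrS, hrE⟩, hrp, _, hE'.preimage_homothety c hρ, ?_⟩
  ext x
  have := hdrop x
  have := hiff x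
  simp only [Finset.mem_filter, Finset.mem_erase, Set.mem_preimage]
  tauto

end Homothets

section Faces

variable {V : Type*} [AddCommGroup V] [Module ℝ V] [TopologicalSpace V] [IsTopologicalAddGroup V]
  [ContinuousSMul ℝ V]

theorem toExposed_subset_frontier {D : Set V} {f : StrongDual ℝ V} (hf : f ≠ 0) :
    f.toExposed D ⊆ frontier D := by
  refine fun x hx => ⟨subset_closure hx.1, fun hint => ?_⟩
  have hhalf : D ⊆ f ⁻¹' Set.Iic (f x) := hx.2
  have : x ∈ f ⁻¹' interior (Set.Iic (f x)) := by
    rw [(f.isOpenMap_of_ne_zero hf).preimage_interior_eq_interior_preimage f.continuous]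
    exact interior_mono hhalf hint
  simp at this

theorem nontrivial_inter_of_isExposed_convexHull [LocallyConvexSpace ℝ V] [T2Space V] {W F : Set V}
    (hW : W.Finite) (hF : IsExposed ℝ (convexHull ℝ W) F) (hnt : F.Nontrivial) :
    (W ∩ F).Nontrivial := by
  have hext : F.extremePoints ℝ ⊆ W ∩ F := Set.subset_inter
    (hF.isExtreme.extremePoints_subset_extremePoints.trans extremePoints_convexHull_subset)
    extremePoints_subset
  by_contra htriv
  have hsub : (F.extremePoints ℝ).Subsingleton := (Set.not_nontrivial_iff.1 htriv).anti hext
  refine Set.not_nontrivial_iff.2 ?_ hnt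
  rw [← closure_convexHull_extremePoints (hF.isCompact (hW.isCompact_convexHull ℝ))
    (hF.convex (convex_convexHull ℝ W))]
  obtain h | ⟨x, h⟩ := hsub.eq_empty_or_singleton <;> simp [h]

end Faces

section Polygons

theorem exists_eq_smul_of_apply_eq_zero {K V : Type*} [Field K] [AddCommGroup V] [Module K V]
    (hV : Module.finrank K V = 2) {f : Module.Dual K V} (hf : f ≠ 0) {u v : V} (hu : f u = 0)
    (hv : f v = 0) (hv0 : v ≠ 0) : ∃ t : K, u = t • v := by
  have : FiniteDimensional K V := .of_finrank_eq_succ hV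
  have hker : Module.finrank K (LinearMap.ker f) = 1 := by
    have := Module.Dual.finrank_ker_add_one_of_ne_zero hf
    omega
  obtain ⟨t, ht⟩ := (finrank_eq_one_iff_of_nonzero' (⟨v, hv⟩ : LinearMap.ker f)
    (by simpa [Subtype.ext_iff] using hv0)).1 hker ⟨u, hu⟩
  exact ⟨t, (congrArg Subtype.val ht).symm⟩

variable {V : Type*} [NormedAddCommGroup V] [NormedSpace ℝ V]

theorem exists_mem_toExposed_of_notMem_interior [FiniteDimensional ℝ V] {D : Set V}
    (hD : Convex ℝ D) {m : V} (hm : m ∈ D) (hint : m ∉ interior D) :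
    ∃ f : StrongDual ℝ V, f ≠ 0 ∧ m ∈ f.toExposed D := by
  by_cases hne : (interior D).Nonempty
  · obtain ⟨f, hf⟩ := geometric_hahn_banach_open_point hD.interior isOpen_interior hint
    have hle : closure (interior D) ⊆ {x | f x ≤ f m} :=
      closure_minimal (fun x hx => (hf x hx).le) (isClosed_le f.continuous continuous_const)
    rw [hD.closure_interior_eq_closure_of_nonempty_interior hne] at hle
    refine ⟨f, ?_, hm, fun x hx => hle (subset_closure hx)⟩
    rintro rfl
    obtain ⟨x, hx⟩ := hne
    exact (hf x hx).false
  · have hspan : vectorSpan ℝ D < ⊤ := by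
      rw [hD.interior_nonempty_iff_affineSpan_eq_top,
        AffineSubspace.affineSpan_eq_top_iff_vectorSpan_eq_top_of_nonempty _ _ _ ⟨m, hm⟩] at hne
      exact lt_top_iff_ne_top.2 hne
    obtain ⟨f, hf0, hker⟩ := Submodule.exists_le_ker_of_lt_top _ hspan
    refine ⟨f.toContinuousLinearMap, by simpa using hf0, hm, fun x hx => ?_⟩
    have : f (x - m) = 0 := hker (vsub_mem_vectorSpan ℝ hx hm)
    exact (sub_eq_zero.1 (map_sub f x m ▸ this)).le

theorem exists_side_parallel_of_segment_subset_frontier (hV : Module.finrank ℝ V = 2) {W : Set V}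
    (hW : W.Finite) {q r : V} (hqr : q ≠ r)
    (hseg : segment ℝ q r ⊆ frontier (convexHull ℝ W)) :
    ∃ a ∈ W, ∃ b ∈ W, a ≠ b ∧ segment ℝ a b ⊆ frontier (convexHull ℝ W) ∧
      ∃ t : ℝ, r - q = t • (b - a) := by
  have : FiniteDimensional ℝ V := .of_finrank_eq_succ hV
  have hconvex := convex_convexHull ℝ W
  have hclosed : IsClosed (convexHull ℝ W) := (hW.isCompact_convexHull ℝ).isClosed
  have hsegD : segment ℝ q r ⊆ convexHull ℝ W := hseg.trans hclosed.frontier_subset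
  have hm : midpoint ℝ q r ∈ segment ℝ q r := midpoint_mem_segment q r
  obtain ⟨f, hf0, hfm⟩ :=
    exists_mem_toExposed_of_notMem_interior hconvex (hsegD hm) (hseg hm).2
  set F := f.toExposed (convexHull ℝ W)
  have hF : IsExposed ℝ (convexHull ℝ W) F := ContinuousLinearMap.toExposed.isExposed
  have hopen : midpoint ℝ q r ∈ openSegment ℝ q r := midpoint_mem_openSegment q r
  have hqD := hsegD (left_mem_segment ℝ q r)
  have hrD := hsegD (right_mem_segment ℝ q r)
  have hq : q ∈ F := hF.isExtreme.left_mem_of_mem_openSegment hqD hrD hfm hopen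
  have hr : r ∈ F := hF.isExtreme.right_mem_of_mem_openSegment hqD hrD hfm hopen
  obtain ⟨a, ⟨haW, ha⟩, b, ⟨hbW, hb⟩, hab⟩ :=
    nontrivial_inter_of_isExposed_convexHull hW hF ⟨q, hq, r, hr, hqr⟩
  have hker {x y : V} (hx : x ∈ F) (hy : y ∈ F) : f (y - x) = 0 := by
    rw [map_sub, sub_eq_zero]
    exact le_antisymm (hx.2 y hy.1) (hy.2 x hx.1)
  have hlin : f.toLinearMap ≠ 0 := fun h => hf0 (ContinuousLinearMap.coe_injective h)
  exact ⟨a, haW, b, hbW, hab,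
    ((hF.convex hconvex).segment_subset ha hb).trans (toExposed_subset_frontier hf0),
    exists_eq_smul_of_apply_eq_zero hV hlin (hker hq hr) (hker ha hb) (sub_ne_zero.2 hab.symm)⟩

theorem GeneralPosition.noPairParallelToBoundary {W S : Finset (ℝ × ℝ)}
    (h : GeneralPosition (convexHull ℝ (W : Set (ℝ × ℝ))) W S) :
    NoPairParallelToBoundary (convexHull ℝ (W : Set (ℝ × ℝ))) (S : Set (ℝ × ℝ)) := by
  intro c d hcd hseg p hp q hq hpq ⟨t, ht⟩
  obtain ⟨a, ha, b, hb, hab, hside, u, hu⟩ :=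
    exists_side_parallel_of_segment_subset_frontier (by simp) W.finite_toSet hcd hseg
  exact h.1 a ha b hb hab hside p hp q hq hpq ⟨t * u, by rw [ht, hu, mul_smul]⟩

end Polygons

theorem stmt_9_general {D : Set (ℝ × ℝ)} (hD : IsCompact D) (hconvex : Convex ℝ D)
    {S : Finset (ℝ × ℝ)} (hS : NoPairParallelToBoundary D (S : Set (ℝ × ℝ))) {D' : Set (ℝ × ℝ)}
    (hD' : IsHomothet D D') (hne : {p : ℝ × ℝ | p ∈ S ∧ p ∈ D'}.Nonempty) :
    ((DelaunayGraph D S).induce {p : ℝ × ℝ | p ∈ S ∧ p ∈ D'}).Connected := by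
  rw [← Finset.coe_filter] at hne ⊢
  exact connected_induce_of_exists_erase_mem
    (fun p q hpq h => delaunayGraph_adj_of_pair_mem_homothetTraces hpq h)
    (fun F hF hnt p hp => exists_erase_mem_homothetTraces hD hconvex hS hF hnt hp)
    _ ⟨D', hD', rfl⟩ (Finset.coe_nonempty.1 hne)

/-- For a convex `n`-gon `D` and a finite point set `S` in general position with respect to
`D`, the points of `S` inside any homothet `D'` of `D` induce a connected subgraph of the
generalized Delaunay triangulation `DT_D(S)`. -/
theorem stmt_9 (n : ℕ) (hn : 3 ≤ n) (W : Finset (ℝ × ℝ)) (hW : W.card = n)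
    (D : Set (ℝ × ℝ)) (hD : D = convexHull ℝ (W : Set (ℝ × ℝ)))
    (S : Finset (ℝ × ℝ)) (hgen : GeneralPosition D W S)
    (D' : Set (ℝ × ℝ)) (hD' : IsHomothet D D')
    (hne : {p : ℝ × ℝ | p ∈ S ∧ p ∈ D'}.Nonempty) :
    ((DelaunayGraph D S).induce {p : ℝ × ℝ | p ∈ S ∧ p ∈ D'}).Connected := by
  subst hD
  exact stmt_9_general (W.finite_toSet.isCompact_convexHull ℝ) (convex_convexHull ℝ _)
    hgen.noPairParallelToBoundary hD' hne
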